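/- In GL(2,ℤ), the images under the mod-2-and-determinant homomorphism onto S₃ × ℤ/2ℤ of any pair of finite-order elements generating GL(2,ℤ) would have to be a pair of elements of order 2 generating S₃ × ℤ/2ℤ; but two elements of order 2 generate a dihedral group, and GL(2,ℤ) is not dihedral (it contains a free subgroup of rank 2), giving a contradiction. Hence GL(2,ℤ) is not generated by two torsion elements. -/

import Mathlib

/-!
The map `GL(2, ℤ) → S₃ × {±1}` (reduction mod 2 and determinant), followed by the sign of `S₃`,
maps `GL(2, ℤ)` onto the noncyclic group `{±1} × {±1}` and kills the center `{±1}`.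
By Cayley–Hamilton, a torsion element `A` has `A²` or `A³` central. If `A³` is central, then `A`
dies in `{±1} × {±1}`, so `A` cannot be a member of a generating pair. Hence both members of a
generating pair of torsion elements have central squares and are involutions modulo the center.
Two involutions generate a dihedral group, in which squares commute, so all commutators
`⁅x², y²⁆` in `GL(2, ℤ)` are central. This fails in a free group of rank two, which embeds in
`GL(2, ℤ)` by playing ping-pong with transvections on the vectors whose first or second coordinate
is the larger one in absolute value.
-/

open Subgroup
open scoped MatrixGroups commutatorElement

section GeneratingPairs

variable {G : Type*} [Group G] {a b x y : G}

theorem mem_zpowers_or_mul_mem_zpowers_of_mem_closure_pair (ha : a ^ 2 = 1) (hb : b ^ 2 = 1)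
    (hx : x ∈ closure {a, b}) : x ∈ zpowers (a * b) ∨ x * a ∈ zpowers (a * b) := by
  have ha_inv : a⁻¹ = a := inv_eq_of_mul_eq_one_left (sq a ▸ ha)
  have hb_inv : b⁻¹ = b := inv_eq_of_mul_eq_one_left (sq b ▸ hb)
  have mul_generator : ∀ x, ∀ y ∈ ({a, b} : Set G),
      x ∈ zpowers (a * b) ∨ x * a ∈ zpowers (a * b) →
        x * y ∈ zpowers (a * b) ∨ x * y * a ∈ zpowers (a * b) := by
    rintro x y (rfl | rfl) (hx | hx)
    · right
      rwa [mul_assoc, ← sq, ha, mul_one]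
    · exact .inl hx
    · right
      have h := mul_mem hx (inv_mem (mem_zpowers (a * y)))
      rwa [mul_inv_rev, ha_inv, hb_inv, ← mul_assoc] at h
    · left
      have h := mul_mem hx (mem_zpowers (a * y))
      rwa [mul_assoc, ← mul_assoc a, ← sq, ha, one_mul] at h
  induction hx using closure_induction_right with
  | one => exact .inl (one_mem _)
  | mul_right x _ y hy ih => exact mul_generator x y hy ih
  | mul_inv_cancel x _ y hy ih =>
    have hy_inv : y⁻¹ = y := by rcases hy with rfl | rfl <;> assumption
    rw [hy_inv]
    exact mul_generator x y hy ih

theorem semiconjBy_mul_inv_of_sq_eq_one (ha : a ^ 2 = 1) (hb : b ^ 2 = 1) :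
    SemiconjBy a (a * b) (a * b)⁻¹ := by
  rw [SemiconjBy, eq_inv_mul_iff_mul_eq]
  calc
    a * b * (a * (a * b)) = a * b * (a ^ 2 * b) := by rw [sq, mul_assoc a a b]
    _ = a * b ^ 2 := by rw [ha, one_mul, mul_assoc, ← sq]
    _ = a := by rw [hb, mul_one]

theorem sq_mem_zpowers_mul_of_mem_closure_pair (ha : a ^ 2 = 1) (hb : b ^ 2 = 1)
    (hx : x ∈ closure {a, b}) : x ^ 2 ∈ zpowers (a * b) := by
  rcases mem_zpowers_or_mul_mem_zpowers_of_mem_closure_pair ha hb hx with hx | ⟨n, hn⟩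
  · exact pow_mem hx 2
  · have hxa : x * a = (a * b) ^ n := hn.symm
    have hax : a * (x * a) = (x * a)⁻¹ * a := by
      rw [hxa, ← inv_zpow]
      exact (semiconjBy_mul_inv_of_sq_eq_one ha hb).zpow_right n
    have hx_sq : x ^ 2 = 1 := calc
      x ^ 2 = x * a ^ 2 * x := by rw [ha, mul_one, sq]
      _ = x * a * (a * (x * a)) * a⁻¹ := by simp only [sq, mul_assoc, mul_inv_cancel, mul_one]
      _ = 1 := by rw [hax, mul_inv_cancel_left, mul_inv_cancel]
    exact hx_sq ▸ one_mem _

theorem commute_sq_sq_of_mem_closure_pair (ha : a ^ 2 = 1) (hb : b ^ 2 = 1)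
    (hx : x ∈ closure {a, b}) (hy : y ∈ closure {a, b}) : Commute (x ^ 2) (y ^ 2) := by
  obtain ⟨m, hm⟩ := sq_mem_zpowers_mul_of_mem_closure_pair ha hb hx
  obtain ⟨n, hn⟩ := sq_mem_zpowers_mul_of_mem_closure_pair ha hb hy
  exact hm ▸ hn ▸ (Commute.refl (a * b)).zpow_zpow m n

theorem commutator_sq_sq_mem_center (ha : a ^ 2 ∈ center G) (hb : b ^ 2 ∈ center G)
    (hab : closure {a, b} = ⊤) (x y : G) : ⁅x ^ 2, y ^ 2⁆ ∈ center G := by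
  let q := QuotientGroup.mk' (center G)
  have hq (g : G) : q g ∈ closure {q a, q b} := by
    rw [← Set.image_pair, ← MonoidHom.map_closure, hab]
    exact mem_map_of_mem q (mem_top g)
  have hq_sq {g : G} (hg : g ^ 2 ∈ center G) : q g ^ 2 = 1 :=
    (map_pow q g 2).symm.trans ((QuotientGroup.eq_one_iff _).mpr hg)
  rw [← QuotientGroup.eq_one_iff, ← QuotientGroup.mk'_apply, map_commutatorElement, map_pow,
    map_pow, commutatorElement_eq_one_iff_commute]
  exact commute_sq_sq_of_mem_closure_pair (hq_sq ha) (hq_sq hb) (hq x) (hq y)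

theorem commutator_of_sq_of_sq_notMem_center {ι : Type*} {i j : ι} (hij : i ≠ j) :
    ⁅FreeGroup.of i ^ 2, FreeGroup.of j ^ 2⁆ ∉ center (FreeGroup ι) := by
  classical
  intro h
  have hword := congrArg FreeGroup.toWord (mem_center_iff.mp h (FreeGroup.of i))
  simp [commutatorElement_def, FreeGroup.of, FreeGroup.toWord_mk, sq, FreeGroup.reduce,
    FreeGroup.invRev, hij, hij.symm] at hword

theorem closure_pair_ne_top_of_injective_freeGroup {ι : Type*} [Nontrivial ι]
    {f : FreeGroup ι →* G} (hf : Function.Injective f) (ha : a ^ 2 ∈ center G)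
    (hb : b ^ 2 ∈ center G) : closure {a, b} ≠ ⊤ := by
  intro hab
  obtain ⟨i, j, hij⟩ := exists_pair_ne ι
  refine commutator_of_sq_of_sq_notMem_center hij (mem_center_iff.mpr fun g ↦ hf ?_)
  have h := commutator_sq_sq_mem_center ha hb hab (f (.of i)) (f (.of j))
  simpa using mem_center_iff.mp h (f g)

theorem isCyclic_of_closure_pair_eq_top {H : Type*} [Group H] {f : G →* H}
    (hf : Function.Surjective f) (hab : closure {a, b} = ⊤) (ha : f a = 1) : IsCyclic H := by
  rw [isCyclic_iff_exists_zpowers_eq_top]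
  refine ⟨f b, ?_⟩
  rw [← MonoidHom.range_eq_top.mpr hf, MonoidHom.range_eq_map, ← hab, MonoidHom.map_closure,
    Set.image_pair, ha, closure_insert_one, zpowers_eq_closure]

end GeneratingPairs

section PingPong

open scoped Function Pointwise

theorem injective_lift_of_zpow_ping_pong {ι G α : Type*} [Nontrivial ι] [Group G] [MulAction G α]
    (a : ι → G) (X : ι → Set α) (hX : ∀ i, (X i).Nonempty) (hdisj : Pairwise (Disjoint on X))
    (hpp : Pairwise fun i j ↦ ∀ n : ℤ, n ≠ 0 → a i ^ n • X j ⊆ X i) :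
    Function.Injective (FreeGroup.lift a) := by
  have hlift : FreeGroup.lift a =
      (Monoid.CoprodI.lift fun i ↦ FreeGroup.lift fun _ : Unit ↦ a i).comp
        freeGroupEquivCoprodI.toMonoidHom := by
    ext i
    simp
  rw [hlift, MonoidHom.coe_comp]
  refine Function.Injective.comp ?_ freeGroupEquivCoprodI.injective
  refine Monoid.CoprodI.lift_injective_of_ping_pong _ (.inr ⟨Classical.arbitrary ι, ?_⟩)
    X hX hdisj fun i j hij ↦ ?_
  · rw [FreeGroup.freeGroupUnitEquivInt.cardinal_eq, Cardinal.mk_denumerable]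
    exact Cardinal.natCast_le_aleph0
  · refine FreeGroup.freeGroupUnitEquivInt.forall_congr_left.mpr fun n hn ↦ ?_
    have hn0 : n ≠ 0 := by
      rintro rfl
      exact hn rfl
    simpa [FreeGroup.freeGroupUnitEquivInt] using hpp hij n hn0

end PingPong

open Matrix

section Transvections

open SpecialLinearGroup

variable {R : Type*} [CommRing R]

section General

variable {ι : Type*} [DecidableEq ι] [Fintype ι] {i j : ι}

theorem transvection_zpow (hij : i ≠ j) (c : R) (n : ℤ) :
    SpecialLinearGroup.transvection hij c ^ n =
      SpecialLinearGroup.transvection hij (n * c) := by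
  let transvectionChar : AddChar R (SpecialLinearGroup ι R) :=
    ⟨SpecialLinearGroup.transvection hij, transvection_coeff_zero hij, transvection_add hij⟩
  rw [← zsmul_eq_mul]
  exact (transvectionChar.map_zsmul_eq_zpow n c).symm

theorem transvection_smul (hij : i ≠ j) (c : R) (v : ι → R) :
    SpecialLinearGroup.transvection hij c • v = v + Pi.single i (c * v j) := by
  simp [Matrix.SpecialLinearGroup.smul_def, transvection_coe, add_mulVec, single_mulVec_eq,
    ← Pi.single_smul]

end General

variable [LinearOrder R] [IsStrictOrderedRing R]

theorem abs_lt_abs_add_intCast_mul_mul {c x y : R} {n : ℤ} (hc : 2 ≤ |c|) (hn : n ≠ 0)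
    (hxy : |x| < |y|) : |y| < |x + n * c * y| := by
  have hn_abs : (1 : R) ≤ |(n : R)| := mod_cast Int.one_le_abs hn
  have hnc : 2 ≤ |n * c| := by
    rw [abs_mul]
    nlinarith
  have htri : |n * c * y| - |x| ≤ |x + n * c * y| := by
    simpa [add_comm] using abs_sub_abs_le_abs_sub (n * c * y) (-x)
  rw [abs_mul] at htri
  nlinarith [abs_nonneg y]

theorem fin_two_ne_rev (i : Fin 2) : i ≠ i.rev := by decide +revert

theorem injective_lift_transvection {c : Fin 2 → R} (hc : ∀ i, 2 ≤ |c i|) :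
    Function.Injective (FreeGroup.lift fun i : Fin 2 ↦
      SpecialLinearGroup.transvection (fin_two_ne_rev i) (c i)) := by
  have eq_rev_of_ne {i j : Fin 2} (hij : i ≠ j) : j = i.rev := by decide +revert
  refine injective_lift_of_zpow_ping_pong _ (fun i ↦ {v : Fin 2 → R | |v i.rev| < |v i|})
    (fun i ↦ ⟨Pi.single i 1, ?_⟩) (fun i j hij ↦ ?_) (fun i j hij n hn ↦ ?_)
  · simp [(fin_two_ne_rev i).symm]
  · obtain rfl := eq_rev_of_ne hij
    refine Set.disjoint_left.mpr fun v hi hrev ↦ ?_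
    simp only [Set.mem_ofPred_eq, Fin.rev_rev] at hi hrev
    exact hi.asymm hrev
  · obtain rfl := eq_rev_of_ne hij
    rintro _ ⟨v, hv, rfl⟩
    simp only [Set.mem_ofPred_eq, Fin.rev_rev] at hv
    simpa [transvection_zpow, transvection_smul, (fin_two_ne_rev i).symm]
      using abs_lt_abs_add_intCast_mul_mul (hc i) hn hv

end Transvections

section TwoByTwo

open Polynomial

variable {R : Type*} [CommRing R]

theorem sq_eq_trace_smul_sub_det_smul_one (M : Matrix (Fin 2) (Fin 2) R) :
    M ^ 2 = M.trace • M - M.det • 1 := by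
  nontriviality R
  have h := M.aeval_self_charpoly
  simp only [charpoly_fin_two, map_add, map_sub, map_mul, map_pow, aeval_X, aeval_C,
    Algebra.algebraMap_eq_smul_one, smul_mul_assoc, one_mul] at h
  rw [← sub_eq_zero, ← h]
  abel

theorem trace_sq_fin_two (M : Matrix (Fin 2) (Fin 2) R) :
    (M ^ 2).trace = M.trace ^ 2 - 2 * M.det := by
  rw [sq_eq_trace_smul_sub_det_smul_one]
  simp only [trace_sub, trace_smul, smul_eq_mul, trace_one, Fintype.card_fin, Nat.cast_ofNat]
  ring

theorem sq_eq_scalar_of_trace_eq_zero {M : Matrix (Fin 2) (Fin 2) R} (hM : M.trace = 0) :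
    M ^ 2 = scalar (Fin 2) (-M.det) := by
  rw [sq_eq_trace_smul_sub_det_smul_one, hM, scalar_apply, ← smul_one_eq_diagonal]
  module

theorem cube_eq_scalar_of_trace_sq_eq_det {M : Matrix (Fin 2) (Fin 2) R}
    (hM : M.trace ^ 2 = M.det) : M ^ 3 = scalar (Fin 2) (-(M.trace * M.det)) := by
  rw [scalar_apply, ← smul_one_eq_diagonal]
  calc
    M ^ 3 = M.trace • M ^ 2 - M.det • M := by
      rw [pow_succ, sq_eq_trace_smul_sub_det_smul_one, sub_mul, smul_mul_assoc, smul_mul_assoc,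
        ← sq, one_mul, sq_eq_trace_smul_sub_det_smul_one]
    _ = (M.trace ^ 2 - M.det) • M - (M.trace * M.det) • 1 := by
      rw [sq_eq_trace_smul_sub_det_smul_one]
      module
    _ = (-(M.trace * M.det)) • 1 := by
      rw [hM]
      module

theorem pow_succ_eq_eval_chebyshev_S_smul_sub {M : Matrix (Fin 2) (Fin 2) R} (hM : M.det = 1)
    (n : ℕ) :
    M ^ (n + 1) = (Chebyshev.S R n).eval M.trace • M -
      (Chebyshev.S R (n - 1)).eval M.trace • 1 := by
  induction n with
  | zero => simp
  | succ n ih =>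
    have hS := congrArg (eval M.trace) (Chebyshev.S_add_one R n)
    simp only [eval_sub, eval_mul, eval_X] at hS
    rw [pow_succ, ih, sub_mul, smul_mul_assoc, ← sq, sq_eq_trace_smul_sub_det_smul_one, hM]
    push_cast
    rw [hS, add_sub_cancel_right, smul_mul_assoc, one_mul]
    module

theorem mem_range_scalar_of_smul_eq_smul_one [IsDomain R] {n : Type*} [DecidableEq n] [Fintype n]
    {M : Matrix n n R} {a b : R} (ha : a ≠ 0) (h : a • M = b • 1) :
    M ∈ Set.range (scalar n) := by
  refine mem_range_scalar_of_commute_single fun i j _ ↦ smul_right_injective _ ha ?_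
  change a • (_ * M) = a • (M * _)
  rw [← mul_smul_comm, ← smul_mul_assoc, h, mul_smul_comm, smul_mul_assoc, mul_one, one_mul]

variable [LinearOrder R] [IsStrictOrderedRing R]

theorem abs_eval_chebyshev_S_sub_one_lt {t : R} (ht : 2 ≤ |t|) (n : ℕ) :
    |(Chebyshev.S R (n - 1)).eval t| < |(Chebyshev.S R n).eval t| := by
  induction n with
  | zero => simp
  | succ n ih =>
    have hS := congrArg (eval t) (Chebyshev.S_add_one R n)
    simp only [eval_sub, eval_mul, eval_X] at hS
    push_cast
    rw [hS, add_sub_cancel_right]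
    have htri := abs_sub_abs_le_abs_sub (t * (Chebyshev.S R n).eval t)
      ((Chebyshev.S R (n - 1)).eval t)
    rw [abs_mul] at htri
    nlinarith [abs_nonneg ((Chebyshev.S R n).eval t)]

theorem mem_range_scalar_of_isOfFinOrder {M : Matrix (Fin 2) (Fin 2) R} (hfin : IsOfFinOrder M)
    (hdet : M.det = 1) (htr : 2 ≤ |M.trace|) : M ∈ Set.range (scalar (Fin 2)) := by
  obtain ⟨n, hn, hMn⟩ := isOfFinOrder_iff_pow_eq_one.mp hfin
  obtain ⟨k, rfl⟩ := Nat.exists_eq_add_of_lt hn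
  rw [zero_add, pow_succ_eq_eval_chebyshev_S_smul_sub hdet] at hMn
  set a := (Chebyshev.S R k).eval M.trace
  set b := (Chebyshev.S R (k - 1)).eval M.trace
  have ha : a ≠ 0 := abs_pos.mp ((abs_nonneg b).trans_lt (abs_eval_chebyshev_S_sub_one_lt htr k))
  refine mem_range_scalar_of_smul_eq_smul_one (b := 1 + b) ha ?_
  rw [add_smul, one_smul]
  exact sub_eq_iff_eq_add.mp hMn

end TwoByTwo

theorem sq_mem_center_or_cube_mem_center {A : GL (Fin 2) ℤ} (hA : IsOfFinOrder A) :
    A ^ 2 ∈ center (GL (Fin 2) ℤ) ∨ A ^ 3 ∈ center (GL (Fin 2) ℤ) := by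
  simp only [GeneralLinearGroup.mem_center_iff_val_mem_range_scalar, Units.val_pow_eq_pow_val]
  have hfin : IsOfFinOrder (A.val ^ 2) := (Units.isOfFinOrder_val.mpr hA).pow
  have hdet_sq : (A.val ^ 2).det = 1 := by
    rw [det_pow]
    exact congrArg Units.val (Int.units_sq A.det)
  by_cases htr_sq : 2 ≤ (A.val ^ 2).trace
  · exact .inl (mem_range_scalar_of_isOfFinOrder hfin hdet_sq (le_abs.mpr (.inl htr_sq)))
  rw [trace_sq_fin_two, not_le] at htr_sq
  have hdet : A.val.det = 1 := by
    refine (Int.isUnit_iff.mp A.det.isUnit).resolve_right fun h ↦ ?_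
    change A.val.det = -1 at h
    nlinarith [sq_nonneg A.val.trace]
  have htr_lt : |A.val.trace| < 2 := abs_lt_of_sq_lt_sq (by linarith) zero_le_two
  obtain htr | htr : A.val.trace = 0 ∨ A.val.trace ^ 2 = 1 := by
    grind
  · exact .inl ⟨_, (sq_eq_scalar_of_trace_eq_zero htr).symm⟩
  · exact .inr ⟨_, (cube_eq_scalar_of_trace_sq_eq_det (htr.trans hdet.symm)).symm⟩

/-- The sign character of `GL(2, ℤ/2) ≅ S₃`, pulled back to `GL(2, ℤ)`. The group `GL(2, ℤ/2)`
permutes all four vectors of `(ℤ/2)²`; since zero is fixed, the sign is that of the permutation of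
the three nonzero ones. -/
def modTwoSign : GL (Fin 2) ℤ →* ℤˣ :=
  Equiv.Perm.sign.comp <|
    (MulAction.toPermHom (GL (Fin 2) (ZMod 2)) (Fin 2 → ZMod 2)).comp <|
      GeneralLinearGroup.map (Int.castRingHom (ZMod 2))

/-- The map `GL(2, ℤ) → S₃ × {±1}` given by reduction mod 2 and determinant, followed by the sign
of `S₃`. -/
def modTwoSignDet : GL (Fin 2) ℤ →* ℤˣ × ℤˣ := modTwoSign.prod GeneralLinearGroup.det

theorem modTwoSignDet_surjective : Function.Surjective modTwoSignDet := by
  let T : GL (Fin 2) ℤ := GeneralLinearGroup.upperRightHom 1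
  let D : GL (Fin 2) ℤ := ⟨!![1, 0; 0, -1], !![1, 0; 0, -1], by decide, by decide⟩
  have hT : modTwoSignDet T = (-1, 1) := by decide
  have hD : modTwoSignDet D = (1, -1) := by decide
  rintro ⟨s, d⟩
  rcases Int.units_eq_one_or s with rfl | rfl <;> rcases Int.units_eq_one_or d with rfl | rfl
  · exact ⟨1, map_one _⟩
  · exact ⟨D, hD⟩
  · exact ⟨T, hT⟩
  · exact ⟨T * D, by rw [map_mul, hT, hD]; rfl⟩

theorem modTwoSignDet_eq_one_of_mem_center {Z : GL (Fin 2) ℤ} (hZ : Z ∈ center (GL (Fin 2) ℤ)) :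
    modTwoSignDet Z = 1 := by
  rw [GeneralLinearGroup.center_eq_range_scalar] at hZ
  obtain ⟨u, rfl⟩ := hZ
  have hmap : GeneralLinearGroup.map (Int.castRingHom (ZMod 2))
      (GeneralLinearGroup.scalar (Fin 2) u) = 1 := by
    rw [GeneralLinearGroup.map_scalar, Subsingleton.elim (Units.map _ u) 1, map_one]
  ext : 1
  · simp only [modTwoSignDet, modTwoSign, MonoidHom.prod_apply, MonoidHom.comp_apply, hmap, map_one,
      Prod.fst_one]
  · simp [modTwoSignDet]

theorem modTwoSignDet_eq_one_of_cube_mem_center {A : GL (Fin 2) ℤ}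
    (hA : A ^ 3 ∈ center (GL (Fin 2) ℤ)) : modTwoSignDet A = 1 := by
  have hcube : modTwoSignDet A ^ 3 = 1 := by
    rw [← map_pow, modTwoSignDet_eq_one_of_mem_center hA]
  have hsq : modTwoSignDet A ^ 2 = 1 := Prod.ext (Int.units_sq _) (Int.units_sq _)
  rwa [pow_succ, hsq, one_mul] at hcube

theorem not_isCyclic_intUnits_prod_intUnits : ¬ IsCyclic (ℤˣ × ℤˣ) := by
  simp [Group.isCyclic_prod_iff]

theorem cube_notMem_center_of_closure_pair_eq_top {A B : GL (Fin 2) ℤ}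
    (hAB : Subgroup.closure {A, B} = ⊤) : A ^ 3 ∉ center (GL (Fin 2) ℤ) := fun hA ↦
  not_isCyclic_intUnits_prod_intUnits <| isCyclic_of_closure_pair_eq_top
    modTwoSignDet_surjective hAB (modTwoSignDet_eq_one_of_cube_mem_center hA)

theorem GL2Z_has_free_subgroup_and_not_torsion_generated :
    (∃ f : FreeGroup (Fin 2) →* Matrix.GeneralLinearGroup (Fin 2) ℤ,
      Function.Injective f) ∧
    ¬ ∃ A B : Matrix.GeneralLinearGroup (Fin 2) ℤ, IsOfFinOrder A ∧ IsOfFinOrder B ∧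
      Subgroup.closure ({A, B} : Set (Matrix.GeneralLinearGroup (Fin 2) ℤ)) = ⊤ := by
  obtain ⟨f, hf⟩ : ∃ f : FreeGroup (Fin 2) →* GL (Fin 2) ℤ, Function.Injective f :=
    ⟨SpecialLinearGroup.toGL.comp _, SpecialLinearGroup.toGL_injective.comp
      (injective_lift_transvection (c := fun _ ↦ 2) (by simp))⟩
  refine ⟨⟨f, hf⟩, ?_⟩
  rintro ⟨A, B, hA, hB, hAB⟩
  have hA_sq : A ^ 2 ∈ center (GL (Fin 2) ℤ) :=
    (sq_mem_center_or_cube_mem_center hA).resolve_right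
      (cube_notMem_center_of_closure_pair_eq_top hAB)
  have hB_sq : B ^ 2 ∈ center (GL (Fin 2) ℤ) :=
    (sq_mem_center_or_cube_mem_center hB).resolve_right
      (cube_notMem_center_of_closure_pair_eq_top (Set.pair_comm A B ▸ hAB))
  exact closure_pair_ne_top_of_injective_freeGroup hf hA_sq hB_sq hAB
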